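/- Fix n ≥ 1, and for j = 1,…,2n set α_j = C(2n−1, j−1)^{1/2}. Let Λ_{2n} = α₁^{-1}ℤ ⊕ ⋯ ⊕ α_{2n}^{-1}ℤ ⊂ ℝ^{2n}, let N = ∏_{j=1}^{2n} C(2n−1, j−1), and let Z : SL(2,ℝ) → M_{2n}(ℝ) be given by Z(A)_{ij} = Σ_{l=0}^{2n} C(j−1, l) C(2n−j, 2n−i−l) α_i^{-1} α_j a^{2n−i−l} b^{l} c^{i+l−j} d^{j−l−1} for A = [[a,b],[c,d]]. Then for every A ∈ SL(2,ℤ) one has Z(A)Λ_{2n} ⊆ Λ_{2n}; consequently the automorphism (u,t) ↦ (Z(A)u, t) of the Heisenberg group H_{2n+1} maps the subgroup Γ_{2n+1} = {(u,t) : u ∈ Λ_{2n}, t ∈ (1/N)ℤ} into itself. -/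

import Mathlib

/-!
Conjugating `Z(A)` by the diagonal matrix of the `α_j` removes the square roots: the matrix
`diag(α) Z(A) diag(α)⁻¹` has entries that are polynomials in the entries of `A` with natural
number coefficients (`alphaCoef_mul_Zrep`). It is therefore an integer matrix when `A` is, so it
preserves `ℤ^{2n}`, which is `diag(α) Λ_{2n}`. The central coordinate of the Heisenberg group is
left fixed, so the statement about `Γ_{2n+1}` follows.
-/

noncomputable section

open Matrix

/-- The symplectic `2n × 2n` matrix `J` with (1-based) entries
`J i j = (-1)^j` if `i + j = 2n + 1` and `0` otherwise. -/
def Jmat (n : ℕ) : Matrix (Fin (2*n)) (Fin (2*n)) ℝ :=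
  Matrix.of fun i j =>
    if ((i : ℕ) + 1) + ((j : ℕ) + 1) = 2*n + 1 then (-1 : ℝ)^((j : ℕ) + 1) else 0

/-- The Heisenberg multiplication on `ℝ^{2n} × ℝ`:
`(u₁,t₁)(u₂,t₂) = (u₁ + u₂, t₁ + t₂ + ⟨u₁, J u₂⟩)`. -/
def heisMul (n : ℕ) (p q : (Fin (2*n) → ℝ) × ℝ) : (Fin (2*n) → ℝ) × ℝ :=
  (p.1 + q.1, p.2 + q.2 + p.1 ⬝ᵥ (Jmat n).mulVec q.1)

/-- `α_j = C(2n-1, j-1)^{1/2}` (with `j` being the 1-based index). -/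
def alphaCoef (n : ℕ) (j : Fin (2*n)) : ℝ :=
  Real.sqrt (Nat.choose (2*n - 1) (j : ℕ))

/-- The lattice `Λ_{2n} = α₁⁻¹ℤ ⊕ ⋯ ⊕ α_{2n}⁻¹ℤ ⊆ ℝ^{2n}`, i.e. the set of
vectors `u` such that `α_j u_j ∈ ℤ` for every `j`. -/
def LambdaLattice (n : ℕ) : Set (Fin (2*n) → ℝ) :=
  {u | ∀ j, ∃ k : ℤ, alphaCoef n j * u j = (k : ℝ)}

/-- `N = α₁² ⋯ α_{2n}² = ∏_j C(2n-1, j-1)`. -/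
def Nden (n : ℕ) : ℕ := ∏ j : Fin (2*n), Nat.choose (2*n - 1) (j : ℕ)

/-- The discrete subgroup `Γ_{2n+1} = {(u,t) : u ∈ Λ_{2n}, t ∈ (1/N)ℤ}` of the
Heisenberg group. -/
def GammaSubgroup (n : ℕ) : Set ((Fin (2*n) → ℝ) × ℝ) :=
  {p | p.1 ∈ LambdaLattice n ∧ ∃ k : ℤ, p.2 = (k : ℝ) / (Nden n : ℝ)}

/-- The `2n`-dimensional irreducible representation of `SL(2,ℝ)`, given (in 1-based
indices `i, j`) by
`Z(A)_{ij} = Σ_l C(j-1, l) C(2n-j, 2n-i-l) α_i⁻¹ α_j a^{2n-i-l} b^l c^{i+l-j} d^{j-l-1}`,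
the sum running over those `l` for which both binomial coefficients are nonzero
(equivalently, over `l` with `j ≤ i + l ≤ 2n`; for such `l` all exponents occurring
are nonnegative). -/
def Zrep (n : ℕ) (A : Matrix (Fin 2) (Fin 2) ℝ) : Matrix (Fin (2*n)) (Fin (2*n)) ℝ :=
  Matrix.of fun i j =>
    ∑ l ∈ Finset.range (2*n + 1),
      if ((j : ℕ) + 1) ≤ ((i : ℕ) + 1) + l ∧ ((i : ℕ) + 1) + l ≤ 2*n then
        (Nat.choose (j : ℕ) l : ℝ) *
        (Nat.choose (2*n - ((j : ℕ) + 1)) (2*n - ((i : ℕ) + 1) - l) : ℝ) *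
        (alphaCoef n i)⁻¹ * alphaCoef n j *
        (A 0 0)^(2*n - ((i : ℕ) + 1) - l) * (A 0 1)^l *
        (A 1 0)^(((i : ℕ) + 1) + l - ((j : ℕ) + 1)) * (A 1 1)^((j : ℕ) - l)
      else 0


/-- The integer matrix `diag(α) Z(A) diag(α)⁻¹`, for `A` with integer entries. -/
def ZrepCore (n : ℕ) (A : Matrix (Fin 2) (Fin 2) ℤ) (i j : Fin (2*n)) : ℤ :=
  ∑ l ∈ Finset.range (2*n + 1),
    if ((j : ℕ) + 1) ≤ ((i : ℕ) + 1) + l ∧ ((i : ℕ) + 1) + l ≤ 2*n then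
      (Nat.choose (j : ℕ) l : ℤ) *
      (Nat.choose (2*n - ((j : ℕ) + 1)) (2*n - ((i : ℕ) + 1) - l) : ℤ) *
      (A 0 0)^(2*n - ((i : ℕ) + 1) - l) * (A 0 1)^l *
      (A 1 0)^(((i : ℕ) + 1) + l - ((j : ℕ) + 1)) * (A 1 1)^((j : ℕ) - l)
    else 0

theorem alphaCoef_ne_zero (n : ℕ) (i : Fin (2*n)) : alphaCoef n i ≠ 0 := by
  have h : 0 < Nat.choose (2*n - 1) (i : ℕ) := Nat.choose_pos (by omega)
  exact (Real.sqrt_pos.mpr (Nat.cast_pos.mpr h)).ne'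

theorem alphaCoef_mul_Zrep (n : ℕ) (A : Matrix (Fin 2) (Fin 2) ℤ) (i j : Fin (2*n)) :
    alphaCoef n i * Zrep n (A.map ((↑) : ℤ → ℝ)) i j =
      (ZrepCore n A i j : ℝ) * alphaCoef n j := by
  have hi := alphaCoef_ne_zero n i
  simp only [Zrep, ZrepCore, Matrix.of_apply, Matrix.map_apply, Finset.mul_sum, Int.cast_sum,
    Finset.sum_mul]
  refine Finset.sum_congr rfl fun l _ => ?_
  split_ifs
  · push_cast
    field_simp
  · simp

/-- For every `A ∈ SL(2,ℤ)` one has `Z(A) Λ_{2n} ⊆ Λ_{2n}`;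
consequently the automorphism `(u,t) ↦ (Z(A)u, t)` of the Heisenberg group maps the
subgroup `Γ_{2n+1}` into itself. -/
theorem Zrep_integral_preserves_lattice (n : ℕ) (hn : 1 ≤ n)
    (A : Matrix (Fin 2) (Fin 2) ℤ) (hA : A.det = 1) :
    (∀ u ∈ LambdaLattice n, (Zrep n (A.map ((↑) : ℤ → ℝ))).mulVec u ∈ LambdaLattice n) ∧
    (∀ p ∈ GammaSubgroup n,
      ((Zrep n (A.map ((↑) : ℤ → ℝ))).mulVec p.1, p.2) ∈ GammaSubgroup n) := by
  have key : ∀ u ∈ LambdaLattice n,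
      (Zrep n (A.map ((↑) : ℤ → ℝ))).mulVec u ∈ LambdaLattice n := by
    intro u hu i
    choose k hk using hu
    refine ⟨∑ j : Fin (2*n), ZrepCore n A i j * k j, ?_⟩
    simp only [Matrix.mulVec, dotProduct, Finset.mul_sum]
    push_cast
    refine Finset.sum_congr rfl fun j _ => ?_
    rw [← mul_assoc, alphaCoef_mul_Zrep, mul_assoc, hk]
  exact ⟨key, fun p hp => ⟨key p.1 hp.1, hp.2⟩⟩

end
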